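/- arXiv:1511.02163 — 13 statements merged into one kernel-verified Lean document; each statement's English description precedes it below -/
import Mathlib

section
/- Let V be a finite set and let f : 2^V → ℝ be a positive polymatroid function. Then d_f(A, B) := f(A △ B) is a metric on the subsets of V: for all A, B, C ⊆ V, (i) d_f(A, B) ≥ 0; (ii) d_f(A, B) = 0 if and only if A = B; (iii) d_f(A, B) = d_f(B, A); and (iv) d_f(A, B) ≤ d_f(A, C) + d_f(C, B). -/
/-- If `f` is a positive polymatroid function (positive, normalized, monotone,
submodular) on a finite ground set `V`, then `d_f(A, B) = f(A △ B)` is a metric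
on the subsets of `V`. -/
theorem submodular_hamming_metric_polymatroid
    {V : Type*} [Fintype V] [DecidableEq V] (f : Finset V → ℝ)
    (hpos : ∀ A : Finset V, A ≠ ∅ → 0 < f A)
    (hnorm : f ∅ = 0)
    (hmono : ∀ A B : Finset V, A ⊆ B → f A ≤ f B)
    (hsubmod : ∀ A B : Finset V, f (A ∪ B) + f (A ∩ B) ≤ f A + f B) :
    (∀ A B : Finset V, 0 ≤ f ((A \ B) ∪ (B \ A))) ∧
    (∀ A B : Finset V, f ((A \ B) ∪ (B \ A)) = 0 ↔ A = B) ∧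
    (∀ A B : Finset V, f ((A \ B) ∪ (B \ A)) = f ((B \ A) ∪ (A \ B))) ∧
    (∀ A B C : Finset V,
      f ((A \ B) ∪ (B \ A)) ≤ f ((A \ C) ∪ (C \ A)) + f ((C \ B) ∪ (B \ C))) := by
  have h0 : ∀ A : Finset V, 0 ≤ f A := fun A => by
    have := hmono ∅ A (Finset.empty_subset A)
    linarith
  refine ⟨fun A B => h0 _, fun A B => ⟨fun h => ?_, ?_⟩, fun A B => by rw [Finset.union_comm], fun A B C => ?_⟩
  · by_contra hne
    have h1 := hpos ((A \ B) ∪ (B \ A)) (fun he => hne (by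
      rw [Finset.union_eq_empty, Finset.sdiff_eq_empty_iff_subset,
        Finset.sdiff_eq_empty_iff_subset] at he
      exact Finset.Subset.antisymm he.1 he.2))
    linarith
  · rintro rfl
    simpa using hnorm
  · have h1 := hsubmod ((A \ C) ∪ (C \ A)) ((C \ B) ∪ (B \ C))
    have h2 := h0 (((A \ C) ∪ (C \ A)) ∩ ((C \ B) ∪ (B \ C)))
    have h3 := hmono ((A \ B) ∪ (B \ A)) (((A \ C) ∪ (C \ A)) ∪ ((C \ B) ∪ (B \ C))) (by
      intro x
      simp only [Finset.mem_union, Finset.mem_sdiff]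
      tauto)
    linarith
end

section
/- Let V be a finite set, let f₁, …, f_m be positive polymatroid functions on 2^V, and let B₁, …, B_m ⊆ V. Define F(A) = Σ_{i=1}^m f_i(A △ B_i) and F̄(A) = Σ_{i=1}^m [ f_i(A \ B_i) + f_i(B_i \ A) ]. If Â ⊆ V minimizes F̄ over all subsets of V, then F(Â) ≤ 2 · min_{A ⊆ V} F(A); that is, exactly minimizing the split objective F̄ yields a 2-approximation for unconstrained minimization of F. -/
/-- Exactly minimizing the split objective `F̄(A) = Σᵢ [fᵢ(A \ Bᵢ) + fᵢ(Bᵢ \ A)]`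
yields a 2-approximation for unconstrained minimization of
`F(A) = Σᵢ fᵢ(A △ Bᵢ)`, when each `fᵢ` is a positive polymatroid. -/
theorem union_split_two_approx_min
    {V : Type*} [Fintype V] [DecidableEq V]
    (m : ℕ) (f : Fin m → Finset V → ℝ) (B : Fin m → Finset V)
    (hpos : ∀ i, ∀ A : Finset V, A ≠ ∅ → 0 < f i A)
    (hnorm : ∀ i, f i ∅ = 0)
    (hmono : ∀ i, ∀ X Y : Finset V, X ⊆ Y → f i X ≤ f i Y)
    (hsubmod : ∀ i, ∀ X Y : Finset V, f i (X ∪ Y) + f i (X ∩ Y) ≤ f i X + f i Y)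
    (Ahat : Finset V)
    (hAhat : ∀ A : Finset V,
      (∑ i, (f i (Ahat \ B i) + f i (B i \ Ahat))) ≤
      (∑ i, (f i (A \ B i) + f i (B i \ A)))) :
    ∀ A : Finset V,
      (∑ i, f i ((Ahat \ B i) ∪ (B i \ Ahat))) ≤
      2 * (∑ i, f i ((A \ B i) ∪ (B i \ A))) := by
  intro A
  refine le_trans (Finset.sum_le_sum (fun i _ => ?_)) (le_trans (hAhat A) ?_)
  · have h1 := hsubmod i (Ahat \ B i) (B i \ Ahat)
    have h2 := hmono i ∅ ((Ahat \ B i) ∩ (B i \ Ahat)) (Finset.empty_subset _)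
    rw [hnorm i] at h2
    linarith
  · rw [Finset.mul_sum]
    refine Finset.sum_le_sum (fun i _ => ?_)
    have h1 := hmono i _ _ (Finset.subset_union_left (s₁ := A \ B i) (s₂ := B i \ A))
    have h2 := hmono i _ _ (Finset.subset_union_right (s₁ := A \ B i) (s₂ := B i \ A))
    linarith
end

section
/- The factor-2 guarantee of the split objective is tight in the limit: let V = {1, 2}, let α > 1, let f₁(Y) = f₂(Y) = |Y|^{1/α}, and let B₁ = {1}, B₂ = {2}. Define F(A) = f₁(A △ B₁) + f₂(A △ B₂) and F̄(A) = Σ_{i=1}^{2} [ f_i(A \ B_i) + f_i(B_i \ A) ]. Then F̄(A) = 2 for every A ⊆ V (so every subset, including ∅ and V, minimizes F̄), while min_{A ⊆ V} F(A) = 2^{1/α} (attained at A = {1} and A = {2}) and F(∅) = F(V) = 2. -/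
/-- Tightness of the factor-2 bound for the split objective: on `V = {1,2}` with
`f₁(Y) = f₂(Y) = |Y|^{1/α}` (`α > 1`), `B₁ = {1}`, `B₂ = {2}`, the split objective
`F̄` is constantly `2`, while `F` has minimum value `2^{1/α}`, attained at `{1}`
and `{2}`, and `F(∅) = F(V) = 2`. -/
theorem union_split_tightness (α : ℝ) (hα : 1 < α) :
    let f : Finset (Fin 2) → ℝ := fun Y => (Y.card : ℝ) ^ (1 / α)
    let B : Fin 2 → Finset (Fin 2) := fun i => {i}
    let F : Finset (Fin 2) → ℝ := fun A => ∑ i, f ((A \ B i) ∪ (B i \ A))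
    let Fbar : Finset (Fin 2) → ℝ := fun A => ∑ i, (f (A \ B i) + f (B i \ A))
    (∀ A : Finset (Fin 2), Fbar A = 2) ∧
    (∀ A : Finset (Fin 2), (2 : ℝ) ^ (1 / α) ≤ F A) ∧
    F {0} = (2 : ℝ) ^ (1 / α) ∧
    F {1} = (2 : ℝ) ^ (1 / α) ∧
    F ∅ = 2 ∧
    F Finset.univ = 2 := by
  intro f B F Fbar
  have hne : 1 / α ≠ 0 := by positivity
  have f0 : ∀ Y : Finset (Fin 2), Y.card = 0 → f Y = 0 := by
    intro Y h
    simp only [f, h, Nat.cast_zero]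
    exact Real.zero_rpow hne
  have f1 : ∀ Y : Finset (Fin 2), Y.card = 1 → f Y = 1 := by
    intro Y h
    simp only [f, h, Nat.cast_one]
    exact Real.one_rpow _
  have f2 : ∀ Y : Finset (Fin 2), Y.card = 2 → f Y = (2 : ℝ) ^ (1 / α) := by
    intro Y h
    simp only [f, h, Nat.cast_ofNat]
  have hle : (2 : ℝ) ^ (1 / α) ≤ 2 := by
    have h1 : 1 / α ≤ 1 := by
      rw [div_le_one (by linarith)]
      exact hα.le
    simpa using Real.rpow_le_rpow_of_exponent_le (by norm_num : (1 : ℝ) ≤ 2) h1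
  have cases4 : ∀ A : Finset (Fin 2), A = ∅ ∨ A = {0} ∨ A = {1} ∨ A = Finset.univ := by
    decide
  have F0 : F {0} = (2 : ℝ) ^ (1 / α) := by
    simp only [F, B, Fin.sum_univ_two]
    rw [f0 _ (by decide), f2 _ (by decide), zero_add]
  have F1 : F {1} = (2 : ℝ) ^ (1 / α) := by
    simp only [F, B, Fin.sum_univ_two]
    rw [f2 _ (by decide), f0 _ (by decide), add_zero]
  have Fe : F ∅ = 2 := by
    simp only [F, B, Fin.sum_univ_two]
    rw [f1 _ (by decide), f1 _ (by decide)]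
    norm_num
  have Fu : F Finset.univ = 2 := by
    simp only [F, B, Fin.sum_univ_two]
    rw [f1 _ (by decide), f1 _ (by decide)]
    norm_num
  refine ⟨?_, ?_, F0, F1, Fe, Fu⟩
  · intro A
    simp only [Fbar, B, Fin.sum_univ_two]
    rcases cases4 A with rfl | rfl | rfl | rfl
    · rw [f0 (∅ \ {0}) (by decide), f1 ({0} \ ∅) (by decide), f0 (∅ \ {1}) (by decide),
        f1 ({1} \ ∅) (by decide)]
      norm_num
    · rw [f0 ({0} \ {0}) (by decide), f1 ({0} \ {1}) (by decide), f1 ({1} \ {0}) (by decide)]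
      norm_num
    · rw [f0 ({1} \ {1}) (by decide), f1 ({0} \ {1}) (by decide), f1 ({1} \ {0}) (by decide)]
      norm_num
    · rw [f1 (Finset.univ \ {0}) (by decide), f0 ({0} \ Finset.univ) (by decide),
        f1 (Finset.univ \ {1}) (by decide), f0 ({1} \ Finset.univ) (by decide)]
      norm_num
  · intro A
    rcases cases4 A with rfl | rfl | rfl | rfl
    · rw [Fe]; exact hle
    · rw [F0]
    · rw [F1]
    · rw [Fu]; exact hle
end

section
/- Let V be a finite set, let f be a positive polymatroid function on 2^V, let m ≥ 1, and let B₁, …, B_m ⊆ V. Define F(A) = Σ_{i=1}^m f(A △ B_i). Then for every A ⊆ V, m · min_{1 ≤ i ≤ m} F(B_i) ≤ 2(m − 1) · F(A). In particular, returning the best of B₁, …, B_m is a (2 − 2/m)-approximation for the unconstrained homogeneous minimization of F. -/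
/-- Best-B guarantee: for a positive polymatroid `f`, sets `B₁, …, B_m` (`m ≥ 1`),
and `F(A) = Σᵢ f(A △ Bᵢ)`, we have `m · minᵢ F(Bᵢ) ≤ 2(m − 1) · F(A)` for every
`A ⊆ V`; i.e., the best of the `Bᵢ` is a `(2 − 2/m)`-approximate minimizer. -/
theorem bestB_approx
    {V : Type*} [Fintype V] [DecidableEq V] (f : Finset V → ℝ)
    (hpos : ∀ A : Finset V, A ≠ ∅ → 0 < f A)
    (hnorm : f ∅ = 0)
    (hmono : ∀ X Y : Finset V, X ⊆ Y → f X ≤ f Y)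
    (hsubmod : ∀ X Y : Finset V, f (X ∪ Y) + f (X ∩ Y) ≤ f X + f Y)
    (m : ℕ) (hm : 0 < m) (B : Fin m → Finset V) :
    let F : Finset V → ℝ := fun A => ∑ i, f ((A \ B i) ∪ (B i \ A))
    ∀ A : Finset V,
      (m : ℝ) * (Finset.univ.inf' (Finset.univ_nonempty_iff.mpr ⟨⟨0, hm⟩⟩)
        fun i => F (B i)) ≤ 2 * ((m : ℝ) - 1) * F A := by
  intro F A
  have hnn : ∀ X, 0 ≤ f X := fun X => hnorm ▸ hmono ∅ X (Finset.empty_subset X)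
  have key : ∀ i j, f ((B i \ B j) ∪ (B j \ B i)) ≤
      f ((A \ B i) ∪ (B i \ A)) + f ((A \ B j) ∪ (B j \ A))
        - (if i = j then 2 * f ((A \ B i) ∪ (B i \ A)) else 0) := by
    intro i j
    by_cases h : i = j
    · subst h
      simp [hnorm]
      linarith
    · rw [if_neg h]
      have h1 := hmono ((B i \ B j) ∪ (B j \ B i))
        (((A \ B i) ∪ (B i \ A)) ∪ ((A \ B j) ∪ (B j \ A))) (by
          intro x
          simp only [Finset.mem_union, Finset.mem_sdiff]
          tauto)
      have h2 := hsubmod ((A \ B i) ∪ (B i \ A)) ((A \ B j) ∪ (B j \ A))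
      have h3 := hnn (((A \ B i) ∪ (B i \ A)) ∩ ((A \ B j) ∪ (B j \ A)))
      linarith
  have hsum : ∑ i, F (B i) ≤ 2 * ((m : ℝ) - 1) * F A := by
    calc ∑ i, F (B i) ≤ ∑ i, ∑ j, (f ((A \ B i) ∪ (B i \ A)) + f ((A \ B j) ∪ (B j \ A))
        - (if i = j then 2 * f ((A \ B i) ∪ (B i \ A)) else 0)) :=
          Finset.sum_le_sum fun i _ => Finset.sum_le_sum fun j _ => key i j
      _ = 2 * ((m : ℝ) - 1) * F A := by
          simp only [Finset.sum_sub_distrib, Finset.sum_add_distrib, Finset.sum_ite_eq,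
            Finset.mem_univ, if_true, Finset.sum_const, Finset.card_univ, Fintype.card_fin,
            nsmul_eq_mul, ← Finset.mul_sum, F]
          ring
  refine le_trans ?_ hsum
  have := Finset.card_nsmul_le_sum (Finset.univ : Finset (Fin m)) (fun i => F (B i))
    (Finset.univ.inf' (Finset.univ_nonempty_iff.mpr ⟨⟨0, hm⟩⟩) fun i => F (B i))
    (fun i hi => Finset.inf'_le (fun i => F (B i)) hi)
  rwa [nsmul_eq_mul, Finset.card_univ, Fintype.card_fin] at this
end

section
/- ('Grow' superdifferential bound.) Let V be a finite set and let f : 2^V → ℝ be submodular. For all A, Y ⊆ V: f(Y) ≤ f(A) − Σ_{j ∈ A \ Y} ( f(V) − f(V \ {j}) ) + Σ_{j ∈ Y \ A} ( f(A ∪ {j}) − f(A) ). Moreover this modular upper bound is tight at Y = A. -/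
/-- "Grow" superdifferential modular upper bound for a submodular function:
`f(Y) ≤ f(A) − Σ_{j ∈ A\Y} (f(V) − f(V\{j})) + Σ_{j ∈ Y\A} (f(A ∪ {j}) − f(A))`,
with equality (tightness) at `Y = A`. -/
theorem grow_superdifferential_bound
    {V : Type*} [Fintype V] [DecidableEq V] (f : Finset V → ℝ)
    (hsubmod : ∀ X Y : Finset V, f (X ∪ Y) + f (X ∩ Y) ≤ f X + f Y) :
    (∀ A Y : Finset V,
      f Y ≤ f A - (∑ j ∈ A \ Y, (f Finset.univ - f (Finset.univ.erase j)))
              + (∑ j ∈ Y \ A, (f (A ∪ {j}) - f A))) ∧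
    (∀ A : Finset V,
      f A - (∑ j ∈ A \ A, (f Finset.univ - f (Finset.univ.erase j)))
          + (∑ j ∈ A \ A, (f (A ∪ {j}) - f A)) = f A) := by
  have h1 : ∀ A S : Finset V, Disjoint S A →
      f (A ∪ S) ≤ f A + ∑ j ∈ S, (f (A ∪ {j}) - f A) := by
    intro A S
    induction S using Finset.induction_on with
    | empty => simp
    | insert a S ha ih =>
      intro hd
      rw [Finset.disjoint_insert_left] at hd
      have h := hsubmod (A ∪ S) (A ∪ {a})
      have e1 : (A ∪ S) ∪ (A ∪ {a}) = A ∪ insert a S := by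
        ext x; simp; tauto
      have e2 : (A ∪ S) ∩ (A ∪ {a}) = A := by
        ext x; simp; grind
      rw [e1, e2] at h
      rw [Finset.sum_insert ha]
      linarith [ih hd.2]
  have h2 : ∀ Y S : Finset V, Disjoint S Y →
      f Y + ∑ j ∈ S, (f Finset.univ - f (Finset.univ.erase j)) ≤ f (Y ∪ S) := by
    intro Y S
    induction S using Finset.induction_on with
    | empty => simp
    | insert a S ha ih =>
      intro hd
      rw [Finset.disjoint_insert_left] at hd
      have h := hsubmod (Y ∪ insert a S) (Finset.univ.erase a)
      have e1 : (Y ∪ insert a S) ∪ (Finset.univ.erase a) = Finset.univ := by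
        ext x; simp; tauto
      have e2 : (Y ∪ insert a S) ∩ (Finset.univ.erase a) = Y ∪ S := by
        ext x; simp; grind
      rw [e1, e2] at h
      rw [Finset.sum_insert ha]
      linarith [ih hd.2]
  refine ⟨fun A Y => ?_, fun A => by simp⟩
  have a := h1 A (Y \ A) Finset.sdiff_disjoint
  have b := h2 Y (A \ Y) Finset.sdiff_disjoint
  have e : Y ∪ (A \ Y) = A ∪ (Y \ A) := by
    ext x; simp; tauto
  rw [e] at b
  linarith
end

section
/- ('Shrink' superdifferential bound.) Let V be a finite set and let f : 2^V → ℝ be submodular. For all A, Y ⊆ V: f(Y) ≤ f(A) − Σ_{j ∈ A \ Y} ( f(A) − f(A \ {j}) ) + Σ_{j ∈ Y \ A} ( f({j}) − f(∅) ). Moreover this modular upper bound is tight at Y = A. -/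
theorem shrink_aux1 {V : Type*} [DecidableEq V] (f : Finset V → ℝ)
    (h : ∀ X Y : Finset V, f (X ∪ Y) + f (X ∩ Y) ≤ f X + f Y) (A S : Finset V) :
    S ⊆ A → f (A \ S) ≤ f A - ∑ j ∈ S, (f A - f (A.erase j)) := by
  induction S using Finset.induction_on with
  | empty => intro _; simp
  | insert j S hj ih =>
    intro hs
    have h1 := ih (fun x hx => hs (Finset.mem_insert_of_mem hx))
    have hjA : j ∈ A := hs (Finset.mem_insert_self j S)
    have h2 := h (A \ S) (A.erase j)
    have e1 : (A \ S) ∪ A.erase j = A := by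
      ext x; by_cases hx : x = j
      · subst hx; simp [hjA, hj]
      · simp [hx]; tauto
    have e2 : (A \ S) ∩ A.erase j = A \ insert j S := by
      ext x; simp; tauto
    rw [e1, e2] at h2
    rw [Finset.sum_insert hj]
    linarith

theorem shrink_aux2 {V : Type*} [DecidableEq V] (f : Finset V → ℝ)
    (h : ∀ X Y : Finset V, f (X ∪ Y) + f (X ∩ Y) ≤ f X + f Y) (B T : Finset V) :
    Disjoint B T → f (B ∪ T) ≤ f B + ∑ j ∈ T, (f {j} - f ∅) := by
  induction T using Finset.induction_on with
  | empty => intro _; simp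
  | insert j T hj ih =>
    intro hd
    rw [Finset.disjoint_insert_right] at hd
    have h1 := ih hd.2
    have h2 := h (B ∪ T) {j}
    have e1 : (B ∪ T) ∪ {j} = B ∪ insert j T := by
      ext x; simp only [Finset.mem_union, Finset.mem_insert, Finset.mem_singleton]; tauto
    have e2 : (B ∪ T) ∩ {j} = ∅ := by
      rw [Finset.inter_singleton_of_notMem]
      simp [hd.1, hj]
    rw [e1, e2] at h2
    rw [Finset.sum_insert hj]
    linarith

/-- "Shrink" superdifferential modular upper bound for a submodular function:
`f(Y) ≤ f(A) − Σ_{j ∈ A\Y} (f(A) − f(A\{j})) + Σ_{j ∈ Y\A} (f({j}) − f(∅))`,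
with equality (tightness) at `Y = A`. -/
theorem shrink_superdifferential_bound
    {V : Type*} [Fintype V] [DecidableEq V] (f : Finset V → ℝ)
    (hsubmod : ∀ X Y : Finset V, f (X ∪ Y) + f (X ∩ Y) ≤ f X + f Y) :
    (∀ A Y : Finset V,
      f Y ≤ f A - (∑ j ∈ A \ Y, (f A - f (A.erase j)))
              + (∑ j ∈ Y \ A, (f {j} - f ∅))) ∧
    (∀ A : Finset V,
      f A - (∑ j ∈ A \ A, (f A - f (A.erase j)))
          + (∑ j ∈ A \ A, (f {j} - f ∅)) = f A) := by
  refine ⟨fun A Y => ?_, fun A => by simp⟩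
  have h1 := shrink_aux1 f hsubmod A (A \ Y) Finset.sdiff_subset
  have h2 := shrink_aux2 f hsubmod (A \ (A \ Y)) (Y \ A)
    (Finset.disjoint_left.2 (by intro x; simp; tauto))
  have e : (A \ (A \ Y)) ∪ (Y \ A) = Y := by
    ext x; simp; tauto
  rw [e] at h2
  linarith
end

section
/- (Curvature sandwich bound.) Let V be a finite set and let f : 2^V → ℝ be a normalized, monotone, submodular set function. Let Y ⊆ V be nonempty with f({j}) > 0 for every j ∈ Y, and define the curvature κ_f(Y) := 1 − min_{j ∈ Y} ( f(Y) − f(Y \ {j}) ) / f({j}). Then f(Y) ≤ Σ_{j ∈ Y} f({j}) ≤ [ |Y| / ( 1 + (|Y| − 1)(1 − κ_f(Y)) ) ] · f(Y). -/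
/-- Curvature sandwich bound: for a normalized, monotone, submodular `f` and
nonempty `Y` with `f({j}) > 0` for all `j ∈ Y`, letting
`κ_f(Y) = 1 − min_{j ∈ Y} (f(Y) − f(Y\{j}))/f({j})`, we have
`f(Y) ≤ Σ_{j ∈ Y} f({j}) ≤ (|Y| / (1 + (|Y| − 1)(1 − κ_f(Y)))) · f(Y)`. -/
theorem curvature_sandwich
    {V : Type*} [Fintype V] [DecidableEq V] (f : Finset V → ℝ)
    (hnorm : f ∅ = 0)
    (hmono : ∀ X Y : Finset V, X ⊆ Y → f X ≤ f Y)
    (hsubmod : ∀ X Y : Finset V, f (X ∪ Y) + f (X ∩ Y) ≤ f X + f Y)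
    (Y : Finset V) (hY : Y.Nonempty) (hsing : ∀ j ∈ Y, 0 < f {j}) :
    let κ : ℝ := 1 - Y.inf' hY (fun j => (f Y - f (Y.erase j)) / f {j})
    f Y ≤ (∑ j ∈ Y, f {j}) ∧
    (∑ j ∈ Y, f {j}) ≤ ((Y.card : ℝ) / (1 + ((Y.card : ℝ) - 1) * (1 - κ))) * f Y := by
  intro κ
  have hsub : ∀ A : Finset V, f A ≤ ∑ j ∈ A, f {j} := by
    intro A
    induction A using Finset.induction_on with
    | empty => simp [hnorm]
    | insert j B hj ih =>
      rw [Finset.sum_insert hj]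
      have h := hsubmod {j} B
      have h1 : ({j} : Finset V) ∩ B = ∅ := by
        ext x; simp; rintro rfl; exact hj
      have h2 : ({j} : Finset V) ∪ B = insert j B := by
        ext x; simp
      rw [h1, h2, hnorm] at h
      linarith
  refine ⟨hsub Y, ?_⟩
  obtain ⟨m, hm⟩ : ∃ m, m = Y.inf' hY (fun j => (f Y - f (Y.erase j)) / f {j}) := ⟨_, rfl⟩
  have hκ : 1 - κ = m := by simp only [κ, ← hm]; ring
  rw [hκ]
  have hm0 : 0 ≤ m := by
    rw [hm]
    apply Finset.le_inf'
    intro j hj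
    have := hmono _ _ (Finset.erase_subset j Y)
    exact div_nonneg (by linarith) (hsing j hj).le
  have hmj : ∀ j ∈ Y, m * f {j} ≤ f Y - f (Y.erase j) := by
    intro j hj
    rw [← le_div_iff₀ (hsing j hj), hm]
    exact Finset.inf'_le (fun j => (f Y - f (Y.erase j)) / f {j}) hj
  have key : ∀ i ∈ Y, ∀ B : Finset V, B ⊆ Y → i ∉ B →
      f {i} + m * ∑ j ∈ B, f {j} ≤ f (insert i B) := by
    intro i hi B
    induction B using Finset.induction_on with
    | empty => intro _ _; simp
    | insert j B hj ih =>
      intro hB hiB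
      rw [Finset.sum_insert hj]
      have hjY : j ∈ Y := hB (Finset.mem_insert_self _ _)
      have hBY : B ⊆ Y := fun x hx => hB (Finset.mem_insert_of_mem hx)
      have ih' := ih hBY (fun h => hiB (Finset.mem_insert_of_mem h))
      have hij : i ≠ j := fun h => hiB (by simp [h])
      have h := hsubmod (insert i (insert j B)) (Y.erase j)
      have h1 : insert i (insert j B) ∪ Y.erase j = Y := by
        ext x
        have := @hBY x
        simp only [Finset.mem_union, Finset.mem_insert, Finset.mem_erase]
        grind
      have h2 : insert i (insert j B) ∩ Y.erase j = insert i B := by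
        ext x
        have := @hBY x
        simp only [Finset.mem_inter, Finset.mem_insert, Finset.mem_erase]
        grind
      rw [h1, h2] at h
      have := hmj j hjY
      linarith
  have hsum : ∑ i ∈ Y, (f {i} + m * (∑ j ∈ Y, f {j} - f {i})) ≤ ∑ _i ∈ Y, f Y := by
    apply Finset.sum_le_sum
    intro i hi
    have h := key i hi (Y.erase i) (Finset.erase_subset _ _) (Finset.notMem_erase _ _)
    rw [Finset.insert_erase hi] at h
    have h3 := Finset.add_sum_erase Y (fun j => f {j}) hi
    have h4 : ∑ j ∈ Y, f {j} - f {i} = ∑ j ∈ Y.erase i, f {j} := by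
      linarith
    rw [h4]; exact h
  rw [Finset.sum_add_distrib, ← Finset.mul_sum, Finset.sum_sub_distrib, Finset.sum_const,
    Finset.sum_const, nsmul_eq_mul, nsmul_eq_mul] at hsum
  have hn : (1 : ℝ) ≤ Y.card := by exact_mod_cast hY.card_pos
  have hD : 0 < 1 + ((Y.card : ℝ) - 1) * m := by
    have := mul_nonneg (sub_nonneg.2 hn) hm0
    linarith
  rw [div_mul_eq_mul_div, le_div_iff₀ hD]
  linarith
end

section
/- (Major-Min approximation guarantee.) Let V be a finite set, let f₁, …, f_m be positive polymatroid functions on 2^V, let B₁, …, B_m ⊆ V, and let 𝒞 ⊆ 2^V be a nonempty constraint family. Define F(A) = Σ_{i=1}^m f_i(A △ B_i) and the modular surrogate F̂(A) = Σ_{i=1}^m Σ_{j ∈ A △ B_i} f_i({j}). Let Â ∈ 𝒞 minimize F̂ over 𝒞 and let A* ∈ 𝒞 minimize F over 𝒞, and suppose A* △ B_i ≠ ∅ for all i. Then F(Â) ≤ [ max_{1 ≤ i ≤ m} |A* △ B_i| / ( 1 + (|A* △ B_i| − 1)(1 − κ_{f_i}(A* △ B_i)) ) ] · F(A*), where κ_f(Y)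 := 1 − min_{j ∈ Y} ( f(Y) − f(Y \ {j}) ) / f({j}). -/
theorem mm_aux1 {V : Type*} [DecidableEq V] (f : Finset V → ℝ)
    (hsubmod : ∀ X Y : Finset V, f (X ∪ Y) + f (X ∩ Y) ≤ f X + f Y)
    (Y : Finset V) (c : ℝ) (hc : ∀ j ∈ Y, c * f {j} ≤ f Y - f (Y.erase j))
    (k : V) (hk : k ∈ Y) (S : Finset V) :
    S ⊆ Y → k ∉ S → f {k} + c * ∑ j ∈ S, f {j} ≤ f (insert k S) := by
  induction S using Finset.induction_on with
  | empty => intro _ _; simp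
  | insert a T ha ih =>
    intro hS hkS
    have haY : a ∈ Y := hS (Finset.mem_insert_self _ _)
    have hTY : T ⊆ Y := fun x hx => hS (Finset.mem_insert_of_mem hx)
    have hka : k ≠ a := fun h => hkS (by simp [h])
    have hkT : k ∉ T := fun h => hkS (Finset.mem_insert_of_mem h)
    have h1 := ih hTY hkT
    have h2 := hc a haY
    have h3 := hsubmod (insert k (insert a T)) (Y.erase a)
    have e1 : insert k (insert a T) ∪ Y.erase a = Y := by
      ext x
      simp only [Finset.mem_union, Finset.mem_insert, Finset.mem_erase]
      constructor
      · rintro ((rfl | rfl | h) | h)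
        · exact hk
        · exact haY
        · exact hTY h
        · exact h.2
      · intro h
        by_cases hx : x = a
        · exact Or.inl (Or.inr (Or.inl hx))
        · exact Or.inr ⟨hx, h⟩
    have e2 : insert k (insert a T) ∩ Y.erase a = insert k T := by
      ext x
      simp only [Finset.mem_inter, Finset.mem_insert, Finset.mem_erase]
      constructor
      · rintro ⟨h | h | h, h', _⟩
        · exact Or.inl h
        · exact absurd h h'
        · exact Or.inr h
      · rintro (rfl | h)
        · exact ⟨Or.inl rfl, hka, hk⟩
        · exact ⟨Or.inr (Or.inr h), fun e => ha (e ▸ h), hTY h⟩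
    rw [e1, e2] at h3
    rw [Finset.sum_insert ha, mul_add]
    linarith

theorem mm_aux2 {V : Type*} [DecidableEq V] (f : Finset V → ℝ)
    (hsubmod : ∀ X Y : Finset V, f (X ∪ Y) + f (X ∩ Y) ≤ f X + f Y)
    (Y : Finset V) (c : ℝ) (hc : ∀ j ∈ Y, c * f {j} ≤ f Y - f (Y.erase j)) :
    (1 + ((Y.card : ℝ) - 1) * c) * ∑ j ∈ Y, f {j} ≤ Y.card * f Y := by
  have h : ∑ k ∈ Y, (f {k} + c * (∑ j ∈ Y, f {j} - f {k})) ≤ ∑ k ∈ Y, f Y := by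
    apply Finset.sum_le_sum
    intro k hk
    have := mm_aux1 f hsubmod Y c hc k hk (Y.erase k) (Finset.erase_subset _ _) (by simp)
    rw [Finset.insert_erase hk] at this
    have h2 := Finset.add_sum_erase Y (fun j => f {j}) hk
    rw [← h2]
    linarith
  rw [Finset.sum_add_distrib, ← Finset.mul_sum, Finset.sum_sub_distrib] at h
  simp only [Finset.sum_const, nsmul_eq_mul] at h
  linarith

theorem mm_aux3 {V : Type*} [DecidableEq V] (f : Finset V → ℝ)
    (hnorm : f ∅ = 0)
    (hsubmod : ∀ X Y : Finset V, f (X ∪ Y) + f (X ∩ Y) ≤ f X + f Y)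
    (Y : Finset V) : f Y ≤ ∑ j ∈ Y, f {j} := by
  induction Y using Finset.induction_on with
  | empty => simp [hnorm]
  | insert a T ha ih =>
    have := hsubmod {a} T
    rw [Finset.singleton_inter_of_notMem ha, hnorm, ← Finset.insert_eq] at this
    rw [Finset.sum_insert ha]
    linarith

theorem mm_aux4 {V : Type*} [DecidableEq V] (f : Finset V → ℝ)
    (hpos : ∀ A : Finset V, A ≠ ∅ → 0 < f A)
    (hmono : ∀ X Y : Finset V, X ⊆ Y → f X ≤ f Y)
    (hsubmod : ∀ X Y : Finset V, f (X ∪ Y) + f (X ∩ Y) ≤ f X + f Y)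
    (Y : Finset V) (hY : Y.Nonempty) :
    ∑ j ∈ Y, f {j} ≤ ((Y.card : ℝ) / (1 + ((Y.card : ℝ) - 1) *
      (Y.inf' hY fun j => (f Y - f (Y.erase j)) / f {j}))) * f Y := by
  have hp : ∀ j, 0 < f {j} := fun j => hpos _ (Finset.singleton_ne_empty j)
  set c := Y.inf' hY fun j => (f Y - f (Y.erase j)) / f {j} with hcdef
  have hc0 : 0 ≤ c := by
    apply Finset.le_inf'
    intro j _
    exact div_nonneg (sub_nonneg.2 (hmono _ _ (Finset.erase_subset _ _))) (hp j).le
  have hc : ∀ j ∈ Y, c * f {j} ≤ f Y - f (Y.erase j) := by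
    intro j hj
    rw [← le_div_iff₀ (hp j)]
    exact Finset.inf'_le (fun j => (f Y - f (Y.erase j)) / f {j}) hj
  have hn : (1 : ℝ) ≤ Y.card := by exact_mod_cast hY.card_pos
  have hd : 0 < 1 + ((Y.card : ℝ) - 1) * c := by
    have := mul_nonneg (sub_nonneg.2 hn) hc0
    linarith
  rw [div_mul_eq_mul_div, le_div_iff₀ hd, mul_comm]
  exact mm_aux2 f hsubmod Y c hc

/-- Major-Min approximation guarantee: if `Â` minimizes the modular surrogate
`F̂(A) = Σᵢ Σ_{j ∈ A △ Bᵢ} fᵢ({j})` over `𝒞` and `A*` minimizes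
`F(A) = Σᵢ fᵢ(A △ Bᵢ)` over `𝒞` (with `A* △ Bᵢ ≠ ∅` for all `i`), then
`F(Â) ≤ (maxᵢ |A* △ Bᵢ| / (1 + (|A* △ Bᵢ| − 1)(1 − κ_{fᵢ}(A* △ Bᵢ)))) · F(A*)`,
where `1 − κ_f(Y) = min_{j ∈ Y} (f(Y) − f(Y\{j}))/f({j})`. -/
theorem major_min_guarantee
    {V : Type*} [Fintype V] [DecidableEq V]
    (m : ℕ) (hm : 0 < m) (f : Fin m → Finset V → ℝ) (B : Fin m → Finset V)
    (hpos : ∀ i, ∀ A : Finset V, A ≠ ∅ → 0 < f i A)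
    (hnorm : ∀ i, f i ∅ = 0)
    (hmono : ∀ i, ∀ X Y : Finset V, X ⊆ Y → f i X ≤ f i Y)
    (hsubmod : ∀ i, ∀ X Y : Finset V, f i (X ∪ Y) + f i (X ∩ Y) ≤ f i X + f i Y)
    (𝒞 : Set (Finset V))
    (Ahat : Finset V) (hAhat : Ahat ∈ 𝒞)
    (hAhatMin : ∀ A ∈ 𝒞, (∑ i, ∑ j ∈ (Ahat \ B i) ∪ (B i \ Ahat), f i {j}) ≤
                          (∑ i, ∑ j ∈ (A \ B i) ∪ (B i \ A), f i {j}))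
    (Astar : Finset V) (hAstar : Astar ∈ 𝒞)
    (hAstarMin : ∀ A ∈ 𝒞, (∑ i, f i ((Astar \ B i) ∪ (B i \ Astar))) ≤
                           (∑ i, f i ((A \ B i) ∪ (B i \ A))))
    (hne : ∀ i, ((Astar \ B i) ∪ (B i \ Astar)).Nonempty) :
    (∑ i, f i ((Ahat \ B i) ∪ (B i \ Ahat))) ≤
      (Finset.univ.sup' (Finset.univ_nonempty_iff.mpr ⟨⟨0, hm⟩⟩) fun i =>
        ((((Astar \ B i) ∪ (B i \ Astar)).card : ℝ) /
          (1 + ((((Astar \ B i) ∪ (B i \ Astar)).card : ℝ) - 1) *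
            (((Astar \ B i) ∪ (B i \ Astar)).inf' (hne i) fun j =>
              (f i ((Astar \ B i) ∪ (B i \ Astar)) -
               f i (((Astar \ B i) ∪ (B i \ Astar)).erase j)) / f i {j})))) *
      (∑ i, f i ((Astar \ B i) ∪ (B i \ Astar))) := by
  refine (Finset.sum_le_sum fun i _ => mm_aux3 (f i) (hnorm i) (hsubmod i) _).trans ?_
  refine (hAhatMin Astar hAstar).trans ?_
  rw [Finset.mul_sum]
  refine Finset.sum_le_sum fun i _ => ?_
  refine (mm_aux4 (f i) (hpos i) (hmono i) (hsubmod i) _ (hne i)).trans ?_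
  refine mul_le_mul_of_nonneg_right ?_ (hpos i _ (hne i).ne_empty).le
  exact Finset.le_sup' (fun i =>
        ((((Astar \ B i) ∪ (B i \ Astar)).card : ℝ) /
          (1 + ((((Astar \ B i) ∪ (B i \ Astar)).card : ℝ) - 1) *
            (((Astar \ B i) ∪ (B i \ Astar)).inf' (hne i) fun j =>
              (f i ((Astar \ B i) ∪ (B i \ Astar)) -
               f i (((Astar \ B i) ∪ (B i \ Astar)).erase j)) / f i {j})))) (Finset.mem_univ i)
end

section
/- Let V be a finite set and let h : 2^V → ℝ be a normalized, symmetric, submodular set function (symmetric means h(A) = h(V \ A) for all A ⊆ V). Define f(A) := h(A) + Σ_{i ∈ A} h({i}). Then: (a) h(A) ≥ 0 for all A ⊆ V; (b) f is normalized, monotone, and submodular; and (c) for every A ⊆ V, f(A) + f(V \ A) = 2 h(A) + Σ_{i ∈ V} h({i}). -/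
/-- For a normalized, symmetric, submodular `h` on a finite ground set `V`, the
function `f(A) = h(A) + Σ_{i ∈ A} h({i})` satisfies: (a) `h ≥ 0`; (b) `f` is
normalized, monotone, and submodular; (c) `f(A) + f(V \ A) = 2h(A) + Σ_{i ∈ V} h({i})`. -/
theorem symmetric_submodular_to_polymatroid
    {V : Type*} [Fintype V] [DecidableEq V] (h : Finset V → ℝ)
    (hnorm : h ∅ = 0)
    (hsymm : ∀ A : Finset V, h A = h (Finset.univ \ A))
    (hsubmod : ∀ X Y : Finset V, h (X ∪ Y) + h (X ∩ Y) ≤ h X + h Y) :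
    let f : Finset V → ℝ := fun A => h A + ∑ i ∈ A, h {i}
    (∀ A : Finset V, 0 ≤ h A) ∧
    (f ∅ = 0) ∧
    (∀ X Y : Finset V, X ⊆ Y → f X ≤ f Y) ∧
    (∀ X Y : Finset V, f (X ∪ Y) + f (X ∩ Y) ≤ f X + f Y) ∧
    (∀ A : Finset V, f A + f (Finset.univ \ A) = 2 * h A + ∑ i : V, h {i}) := by
  intro f
  have hsub : ∀ A : Finset V, h A ≤ ∑ i ∈ A, h {i} := by
    intro A
    induction A using Finset.induction_on with
    | empty => simp [hnorm]
    | insert a s ha ih =>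
      rw [Finset.sum_insert ha]
      have h1 := hsubmod {a} s
      have h2 : ({a} : Finset V) ∩ s = ∅ := by
        ext x; simp; rintro rfl; exact ha
      have h3 : ({a} : Finset V) ∪ s = insert a s := by
        ext x; simp
      rw [h2, h3, hnorm] at h1
      linarith
  have huniv : h Finset.univ = 0 := by
    rw [hsymm]; simpa using hnorm
  refine ⟨?_, ?_, ?_, ?_, ?_⟩
  · intro A
    have h1 := hsubmod A (Finset.univ \ A)
    have h2 : A ∪ (Finset.univ \ A) = Finset.univ := by ext x; simp [em]
    have h3 : A ∩ (Finset.univ \ A) = ∅ := by ext x; simp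
    rw [h2, h3, hnorm, huniv, ← hsymm A] at h1
    linarith
  · simp [f, hnorm]
  · intro X Y hXY
    have h1 := hsubmod (Finset.univ \ Y) (Y \ X)
    have h2 : (Finset.univ \ Y) ∪ (Y \ X) = Finset.univ \ X := by
      ext x; have := @hXY x; simp; tauto
    have h3 : (Finset.univ \ Y) ∩ (Y \ X) = ∅ := by ext x; simp; tauto
    rw [h2, h3, hnorm, ← hsymm X, ← hsymm Y] at h1
    have h4 := hsub (Y \ X)
    have h5 := Finset.sum_sdiff (f := fun i => h {i}) hXY
    simp only [f]
    linarith
  · intro X Y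
    have h1 := hsubmod X Y
    have h2 := Finset.sum_union_inter (s₁ := X) (s₂ := Y) (f := fun i => h {i})
    simp only [f]
    linarith
  · intro A
    have h2 := hsymm A
    have h5 := Finset.sum_sdiff (f := fun i => h {i}) (Finset.subset_univ A)
    simp only [f]
    linarith
end

section
/- (Approximation transfer for maximization via the split objective.) Let V be a finite set, let f₁, …, f_m be positive polymatroid functions on 2^V, let B₁, …, B_m ⊆ V, and let 𝒞 ⊆ 2^V be nonempty. Define F(A) = Σ_{i=1}^m f_i(A △ B_i) and F̄(A) = Σ_{i=1}^m [ f_i(A \ B_i) + f_i(B_i \ A) ]. If α ∈ [0, 1] and Ā ∈ 𝒞 satisfies F̄(Ā) ≥ α · max_{A ∈ 𝒞} F̄(A), then F(Ā) ≥ (α/2) · max_{A ∈ 𝒞} F(A). -/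
/-- Approximation transfer for maximization via the split objective: if
`Ā ∈ 𝒞` is an `α`-approximate maximizer of `F̄(A) = Σᵢ [fᵢ(A \ Bᵢ) + fᵢ(Bᵢ \ A)]`
over `𝒞`, then `Ā` is an `(α/2)`-approximate maximizer of
`F(A) = Σᵢ fᵢ(A △ Bᵢ)` over `𝒞`, for positive polymatroids `fᵢ`. -/
theorem union_split_max_transfer
    {V : Type*} [Fintype V] [DecidableEq V]
    (m : ℕ) (f : Fin m → Finset V → ℝ) (B : Fin m → Finset V)
    (hpos : ∀ i, ∀ A : Finset V, A ≠ ∅ → 0 < f i A)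
    (hnorm : ∀ i, f i ∅ = 0)
    (hmono : ∀ i, ∀ X Y : Finset V, X ⊆ Y → f i X ≤ f i Y)
    (hsubmod : ∀ i, ∀ X Y : Finset V, f i (X ∪ Y) + f i (X ∩ Y) ≤ f i X + f i Y)
    (𝒞 : Set (Finset V)) (h𝒞 : 𝒞.Nonempty)
    (α : ℝ) (hα0 : 0 ≤ α) (hα1 : α ≤ 1)
    (Abar : Finset V) (hAbar : Abar ∈ 𝒞)
    (happrox : ∀ A ∈ 𝒞,
      α * (∑ i, (f i (A \ B i) + f i (B i \ A))) ≤
      (∑ i, (f i (Abar \ B i) + f i (B i \ Abar)))) :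
    ∀ A ∈ 𝒞,
      (α / 2) * (∑ i, f i ((A \ B i) ∪ (B i \ A))) ≤
      (∑ i, f i ((Abar \ B i) ∪ (B i \ Abar))) := by
  intro A hA
  have h1 : (∑ i, f i ((A \ B i) ∪ (B i \ A))) ≤ ∑ i, (f i (A \ B i) + f i (B i \ A)) := by
    refine Finset.sum_le_sum fun i _ => ?_
    have h := hsubmod i (A \ B i) (B i \ A)
    have h0 := hmono i ∅ ((A \ B i) ∩ (B i \ A)) (Finset.empty_subset _)
    rw [hnorm i] at h0
    linarith
  have h2 : (∑ i, (f i (Abar \ B i) + f i (B i \ Abar))) ≤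
      2 * ∑ i, f i ((Abar \ B i) ∪ (B i \ Abar)) := by
    rw [Finset.mul_sum]
    refine Finset.sum_le_sum fun i _ => ?_
    have ha := hmono i _ _ (Finset.subset_union_left (s₁ := Abar \ B i) (s₂ := B i \ Abar))
    have hb := hmono i _ _ (Finset.subset_union_right (s₁ := Abar \ B i) (s₂ := B i \ Abar))
    linarith
  have h3 := happrox A hA
  have h4 := mul_le_mul_of_nonneg_left h1 hα0
  linarith
end

section
/- (A random subset is a 1/8-approximation for unconstrained SH-max in expectation.) Let V be a finite set with n elements, let f₁, …, f_m be positive polymatroid functions on 2^V, let B₁, …, B_m ⊆ V, and define F(A) = Σ_{i=1}^m f_i(A △ B_i). If R is a uniformly random subset of V, then E[F(R)] = 2^{−n} Σ_{R ⊆ V} F(R) ≥ (1/8) · max_{A ⊆ V} F(A). -/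
/-- A uniformly random subset is a 1/8-approximation in expectation for
unconstrained SH-max: with `F(A) = Σᵢ fᵢ(A △ Bᵢ)` for positive polymatroids `fᵢ`,
`2^{-n} Σ_{R ⊆ V} F(R) ≥ (1/8) · max_{A ⊆ V} F(A)`. -/
theorem random_subset_eighth_approx
    {V : Type*} [Fintype V] [DecidableEq V]
    (m : ℕ) (f : Fin m → Finset V → ℝ) (B : Fin m → Finset V)
    (hpos : ∀ i, ∀ A : Finset V, A ≠ ∅ → 0 < f i A)
    (hnorm : ∀ i, f i ∅ = 0)
    (hmono : ∀ i, ∀ X Y : Finset V, X ⊆ Y → f i X ≤ f i Y)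
    (hsubmod : ∀ i, ∀ X Y : Finset V, f i (X ∪ Y) + f i (X ∩ Y) ≤ f i X + f i Y) :
    let F : Finset V → ℝ := fun A => ∑ i, f i ((A \ B i) ∪ (B i \ A))
    ∀ A : Finset V,
      (1 / 8) * F A ≤ ((2 : ℝ) ^ (Fintype.card V))⁻¹ * ∑ R : Finset V, F R := by
  intro F A
  have hcard : (0:ℝ) < (2 : ℝ) ^ (Fintype.card V) := by positivity
  have hF : ∀ X, F X = ∑ i, f i (symmDiff X (B i)) := fun X => rfl
  have key : ∀ i, (2 : ℝ) ^ (Fintype.card V) * f i Finset.univ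
      ≤ 2 * ∑ R : Finset V, f i (symmDiff R (B i)) := by
    intro i
    have h1 : ∑ R : Finset V, f i (symmDiff R (B i)) = ∑ R : Finset V, f i R :=
      Function.Bijective.sum_comp
        (Function.Involutive.bijective (fun R => symmDiff_symmDiff_cancel_right (B i) R)) (f i)
    have h2 : ∑ R : Finset V, f i Rᶜ = ∑ R : Finset V, f i R :=
      Function.Bijective.sum_comp compl_bijective (f i)
    have h3 : ∑ R : Finset V, f i Finset.univ ≤ ∑ R : Finset V, (f i R + f i Rᶜ) := by
      apply Finset.sum_le_sum
      intro R _
      have h := hsubmod i R Rᶜ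
      rw [Finset.union_compl, Finset.inter_compl, hnorm] at h
      linarith
    rw [Finset.sum_add_distrib, h2, Finset.sum_const, Finset.card_univ, Fintype.card_finset,
      nsmul_eq_mul] at h3
    push_cast at h3
    rw [h1]
    linarith
  rw [inv_mul_eq_div, le_div_iff₀ hcard]
  simp only [hF]
  rw [Finset.sum_comm, Finset.mul_sum, Finset.sum_mul]
  apply Finset.sum_le_sum
  intro i _
  have hk := key i
  have h0 : 0 ≤ f i (symmDiff A (B i)) := by
    rw [← hnorm i]
    exact hmono i _ _ (Finset.empty_subset _)
  have hle := mul_le_mul_of_nonneg_left (hmono i (symmDiff A (B i)) _ (Finset.subset_univ _)) hcard.le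
  have := mul_nonneg hcard.le h0
  linarith
end

section
/- Let G = (V, E) be a finite undirected graph, let k > 1, let γ₂ > 0, and let γ₁ := (2^k − 1)·γ₂ (so that (γ₁ + γ₂)^{1/k} = 2·γ₂^{1/k} and γ₁ > γ₂). For each edge e = {u, v} ∈ E define f_{1e}(Y) = (γ₁|Y ∩ {u}| + γ₂|Y ∩ {v}|)^{1/k}, f_{2e}(Y) = (γ₂|Y ∩ {u}| + γ₁|Y ∩ {v}|)^{1/k}, h_e(A) = f_{1e}(A △ {u}) + f_{2e}(A △ {v}), and F^c(A) = Σ_{e ∈ E} h_e(A). Then for every edge e = {u,v}, h_e(A) = 2·γ₂^{1/k} if A contains at least one of u, v, and h_e(A) = 2·γ₁^{1/k} otherwise; consequently F^c(A) ≥ 2|E|·γ₂^{1/k} for all A ⊆ V, and A minimizes F^c over 2^V if and only if A is a vertex cover of G. -/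
/-- The vertex-cover gadget: with `γ₁ = (2^k − 1)γ₂` and, for each edge `e = (u,v)`,
`h_e(A) = f_{1e}(A △ {u}) + f_{2e}(A △ {v})` where
`f_{1e}(Y) = (γ₁[u ∈ Y] + γ₂[v ∈ Y])^{1/k}` and `f_{2e}(Y) = (γ₂[u ∈ Y] + γ₁[v ∈ Y])^{1/k}`,
each `h_e(A)` equals `2γ₂^{1/k}` if `A` covers `e` and `2γ₁^{1/k}` otherwise; hence
`F^c(A) = Σ_e h_e(A) ≥ 2|E|γ₂^{1/k}`, and `A` minimizes `F^c` iff `A` is a vertex cover. -/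
theorem vertex_cover_gadget
    {V : Type*} [Fintype V] [DecidableEq V]
    (E : Finset (V × V)) (hE : ∀ e ∈ E, e.1 ≠ e.2)
    (k : ℝ) (hk : 1 < k) (γ₂ : ℝ) (hγ₂ : 0 < γ₂) :
    let γ₁ : ℝ := ((2 : ℝ) ^ k - 1) * γ₂
    let f₁ : V × V → Finset V → ℝ := fun e Y =>
      (γ₁ * (if e.1 ∈ Y then (1 : ℝ) else 0) + γ₂ * (if e.2 ∈ Y then (1 : ℝ) else 0)) ^ (1 / k)
    let f₂ : V × V → Finset V → ℝ := fun e Y =>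
      (γ₂ * (if e.1 ∈ Y then (1 : ℝ) else 0) + γ₁ * (if e.2 ∈ Y then (1 : ℝ) else 0)) ^ (1 / k)
    let h : V × V → Finset V → ℝ := fun e A =>
      f₁ e ((A \ {e.1}) ∪ ({e.1} \ A)) + f₂ e ((A \ {e.2}) ∪ ({e.2} \ A))
    let Fc : Finset V → ℝ := fun A => ∑ e ∈ E, h e A
    (∀ e ∈ E, ∀ A : Finset V,
      ((e.1 ∈ A ∨ e.2 ∈ A) → h e A = 2 * γ₂ ^ (1 / k)) ∧
      ((e.1 ∉ A ∧ e.2 ∉ A) → h e A = 2 * γ₁ ^ (1 / k))) ∧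
    (∀ A : Finset V, 2 * (E.card : ℝ) * γ₂ ^ (1 / k) ≤ Fc A) ∧
    (∀ A : Finset V, (∀ A' : Finset V, Fc A ≤ Fc A') ↔ (∀ e ∈ E, e.1 ∈ A ∨ e.2 ∈ A)) := by
  intro γ₁ f₁ f₂ h Fc
  have hk0 : (0 : ℝ) < k := by linarith
  have h2k : (2 : ℝ) < (2 : ℝ) ^ k := by
    have := Real.rpow_lt_rpow_of_exponent_lt (x := (2 : ℝ)) (by norm_num) hk
    simpa using this
  have hlt : γ₂ < γ₁ := by
    change γ₂ < ((2 : ℝ) ^ k - 1) * γ₂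
    nlinarith
  have hinv : 0 < 1 / k := by positivity
  have hplt : γ₂ ^ (1 / k) < γ₁ ^ (1 / k) := Real.rpow_lt_rpow hγ₂.le hlt hinv
  have hsum : (γ₁ + γ₂) ^ (1 / k) = 2 * γ₂ ^ (1 / k) := by
    have e1 : γ₁ + γ₂ = (2 : ℝ) ^ k * γ₂ := by
      change ((2 : ℝ) ^ k - 1) * γ₂ + γ₂ = _
      ring
    rw [e1, Real.mul_rpow (by positivity) hγ₂.le, ← Real.rpow_mul (by norm_num),
      mul_one_div_cancel hk0.ne', Real.rpow_one]
  have hsum' : (γ₂ + γ₁) ^ (1 / k) = 2 * γ₂ ^ (1 / k) := by rw [add_comm, hsum]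
  have hz : (0 : ℝ) ^ (1 / k) = 0 := Real.zero_rpow hinv.ne'
  clear_value γ₁
  have key : ∀ e ∈ E, ∀ A : Finset V,
      ((e.1 ∈ A ∨ e.2 ∈ A) → h e A = 2 * γ₂ ^ (1 / k)) ∧
      ((e.1 ∉ A ∧ e.2 ∉ A) → h e A = 2 * γ₁ ^ (1 / k)) := by
    intro e he A
    have hne := hE e he
    have hne' := hne.symm
    simp only [h, f₁, f₂, Finset.mem_union, Finset.mem_sdiff, Finset.mem_singleton]
    by_cases h1 : e.1 ∈ A <;> by_cases h2 : e.2 ∈ A <;>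
      simp only [h1, h2, hne, hne', not_true_eq_false, not_false_eq_true, and_true, and_false,
        true_and, false_and, or_true, or_false, if_true, if_false, mul_one, mul_zero, add_zero,
        zero_add, hsum, hsum', hz, or_self, and_self, forall_true_left, false_imp_iff,
        true_imp_iff] <;> ring
  have hge : ∀ e ∈ E, ∀ A : Finset V, 2 * γ₂ ^ (1 / k) ≤ h e A := by
    intro e he A
    by_cases hc : e.1 ∈ A ∨ e.2 ∈ A
    · exact ((key e he A).1 hc).ge
    · rw [(key e he A).2 (not_or.mp hc)]
      linarith
  have hconst : ∑ _e ∈ E, 2 * γ₂ ^ (1 / k) = 2 * (E.card : ℝ) * γ₂ ^ (1 / k) := by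
    rw [Finset.sum_const, nsmul_eq_mul]
    ring
  have hlow : ∀ A : Finset V, 2 * (E.card : ℝ) * γ₂ ^ (1 / k) ≤ Fc A := by
    intro A
    rw [← hconst]
    exact Finset.sum_le_sum fun e he => hge e he A
  have hcov : ∀ A : Finset V, (∀ e ∈ E, e.1 ∈ A ∨ e.2 ∈ A) →
      Fc A = 2 * (E.card : ℝ) * γ₂ ^ (1 / k) := by
    intro A hA
    rw [← hconst]
    exact Finset.sum_congr rfl fun e he => (key e he A).1 (hA e he)
  refine ⟨key, hlow, fun A => ⟨fun hmin => ?_, fun hA A' => ?_⟩⟩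
  · by_contra hcon
    push Not at hcon
    obtain ⟨e, he, hc⟩ := hcon
    have hu := hmin Finset.univ
    rw [hcov Finset.univ (by simp), ← hconst] at hu
    have : ∑ _e ∈ E, 2 * γ₂ ^ (1 / k) < Fc A := by
      refine Finset.sum_lt_sum (fun e he => hge e he A) ⟨e, he, ?_⟩
      rw [(key e he A).2 hc]
      linarith
    linarith
  · rw [hcov A hA]
    exact hlow A'
end

section
/- Let G = (V, E) be a finite undirected graph with E ≠ ∅, let k > 1, let γ₂ > 0, and let γ₁ := (2^k − 1)·γ₂. For each edge e = {u, v} ∈ E define f_{1e}(Y) = (γ₁|Y ∩ {u}| + γ₂|Y ∩ {v}|)^{1/k}, f_{2e}(Y) = (γ₂|Y ∩ {u}| + γ₁|Y ∩ {v}|)^{1/k}, h_e(A) = f_{1e}(A △ {u}) + f_{2e}(A △ {v}), and F^c(A) = Σ_{e ∈ E} h_e(A). Let g : 2^V → ℝ be monotone with unit increments bounded by c ≥ 0, i.e., 0 ≤ g(A ∪ {u}) − g(A) ≤ c for all A ⊆ V and u ∈ V, and suppose 2(γ₁^{1/k} − γ₂^{1/k}) > c. Then every minimizer of A ↦ g(A)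 + F^c(A) over 2^V is a vertex cover of G. -/
/-- With the vertex-cover gadget `F^c` built from `γ₁ = (2^k − 1)γ₂`, if
`g` is monotone with unit increments bounded by `c` (i.e.,
`0 ≤ g(A ∪ {u}) − g(A) ≤ c`) and `2(γ₁^{1/k} − γ₂^{1/k}) > c`, then every
minimizer of `A ↦ g(A) + F^c(A)` over all subsets of `V` is a vertex cover. -/
theorem vertex_cover_gadget_perturbed
    {V : Type*} [Fintype V] [DecidableEq V]
    (E : Finset (V × V)) (hEne : E.Nonempty) (hE : ∀ e ∈ E, e.1 ≠ e.2)
    (k : ℝ) (hk : 1 < k) (γ₂ : ℝ) (hγ₂ : 0 < γ₂)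
    (g : Finset V → ℝ) (c : ℝ) (hc : 0 ≤ c)
    (hg : ∀ (A : Finset V) (u : V),
      0 ≤ g (A ∪ {u}) - g A ∧ g (A ∪ {u}) - g A ≤ c)
    (hgap : c < 2 * ((((2 : ℝ) ^ k - 1) * γ₂) ^ (1 / k) - γ₂ ^ (1 / k))) :
    let γ₁ : ℝ := ((2 : ℝ) ^ k - 1) * γ₂
    let f₁ : V × V → Finset V → ℝ := fun e Y =>
      (γ₁ * (if e.1 ∈ Y then (1 : ℝ) else 0) + γ₂ * (if e.2 ∈ Y then (1 : ℝ) else 0)) ^ (1 / k)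
    let f₂ : V × V → Finset V → ℝ := fun e Y =>
      (γ₂ * (if e.1 ∈ Y then (1 : ℝ) else 0) + γ₁ * (if e.2 ∈ Y then (1 : ℝ) else 0)) ^ (1 / k)
    let h : V × V → Finset V → ℝ := fun e A =>
      f₁ e ((A \ {e.1}) ∪ ({e.1} \ A)) + f₂ e ((A \ {e.2}) ∪ ({e.2} \ A))
    let Fc : Finset V → ℝ := fun A => ∑ e ∈ E, h e A
    ∀ A : Finset V,
      (∀ A' : Finset V, g A + Fc A ≤ g A' + Fc A') →
      (∀ e ∈ E, e.1 ∈ A ∨ e.2 ∈ A) := by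
  intro γ₁ f₁ f₂ h Fc A hmin e he
  have hk0 : k ≠ 0 := by linarith
  have hik : (1 / k) ≠ 0 := one_div_ne_zero hk0
  have hs : (γ₁ + γ₂) ^ (1 / k) = 2 * γ₂ ^ (1 / k) := by
    have h1 : γ₁ + γ₂ = (2 : ℝ) ^ k * γ₂ := by simp only [γ₁]; ring
    rw [h1, Real.mul_rpow (by positivity) hγ₂.le, ← Real.rpow_mul (by norm_num),
      mul_one_div_cancel hk0, Real.rpow_one]
  have hs' : (γ₂ + γ₁) ^ (1 / k) = 2 * γ₂ ^ (1 / k) := by rw [add_comm, hs]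
  have hgap' : c < 2 * (γ₁ ^ (1 / k) - γ₂ ^ (1 / k)) := hgap
  have hz : (0 : ℝ) ^ (1 / k) = 0 := Real.zero_rpow hik
  have key : ∀ e ∈ E, ∀ A : Finset V,
      h e A = if e.1 ∈ A ∨ e.2 ∈ A then 2 * γ₂ ^ (1 / k) else 2 * γ₁ ^ (1 / k) := by
    intro e he A
    have hne := hE e he
    have hne' := hne.symm
    clear_value γ₁
    simp only [h, f₁, f₂, Finset.mem_union, Finset.mem_sdiff, Finset.mem_singleton]
    by_cases h1 : e.1 ∈ A <;> by_cases h2 : e.2 ∈ A <;>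
      simp only [h1, h2, hne, hne', not_true, not_false_eq_true, and_true, and_false, true_and,
        false_and, or_true, or_false, true_or, false_or, if_true, if_false, mul_one, mul_zero,
        add_zero, zero_add, hs, hs', hz, and_self, or_self] <;> ring
  clear_value h
  by_contra hcon
  have hm := hmin (A ∪ {e.1})
  have hgA := (hg A e.1).2
  have hlt : Fc (A ∪ {e.1}) + 2 * (γ₁ ^ (1 / k) - γ₂ ^ (1 / k)) ≤ Fc A := by
    simp only [Fc]
    rw [← Finset.add_sum_erase E _ he, ← Finset.add_sum_erase E (fun e => h e A) he]
    have h1 : h e (A ∪ {e.1}) = 2 * γ₂ ^ (1 / k) := by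
      rw [key e he, if_pos]; simp
    have h2 : h e A = 2 * γ₁ ^ (1 / k) := by
      rw [key e he, if_neg hcon]
    have h3 : ∑ x ∈ E.erase e, h x (A ∪ {e.1}) ≤ ∑ x ∈ E.erase e, h x A := by
      apply Finset.sum_le_sum
      intro x hx
      have hx' := Finset.mem_of_mem_erase hx
      rw [key x hx', key x hx']
      by_cases h4 : x.1 ∈ A ∨ x.2 ∈ A
      · rw [if_pos h4, if_pos]
        rcases h4 with h4 | h4 <;> simp [h4]
      · rw [if_neg h4]
        split_ifs <;> linarith
    simp only [h1, h2]
    linarith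
  linarith
end
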